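/- Let Φ be a stationary random measure on ℝ^d with intensity λ_Φ := E[Φ([0,1)^d)] ∈ (0,∞). Then there exists a unique σ-finite measure Q on M(ℝ^d) such that for every measurable function g : ℝ^d × M(ℝ^d) → [0,∞], E[∫ g(x, T_xΦ) dΦ(x)] = ∫_{ℝ^d} ∫_{M(ℝ^d)} g(x, ψ) dQ(ψ) dx; moreover Q has total mass λ_Φ. -/

import Mathlib

open MeasureTheory ENNReal

noncomputable section

/-- `ℝ^d`. -/
abbrev Vec (d : ℕ) := Fin d → ℝ

/-- The shift `T_t ψ`, defined by `(T_t ψ)(A) = ψ(A + t)`. -/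
def shiftM {d : ℕ} (t : Vec d) (ψ : Measure (Vec d)) : Measure (Vec d) :=
  ψ.map (fun x => x - t)

/-- A measure is in `M(ℝ^d)` iff it is finite on bounded sets. -/
def BddFinite {d : ℕ} (ψ : Measure (Vec d)) : Prop :=
  ∀ s : Set (Vec d), Bornology.IsBounded s → ψ s < ⊤

/-- Translation covariance of `g : M(ℝ^d) × ℝ^d × ℝ^d → [0,∞]`. -/
def Covariant3 {d : ℕ} (g : Measure (Vec d) → Vec d → Vec d → ℝ≥0∞) : Prop :=
  ∀ (t x y : Vec d) (ψ : Measure (Vec d)), g (shiftM t ψ) (x - t) (y - t) = g ψ x y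

/-- A random measure `Ψ` on a probability space `(Ω, P)` is mass-stationary if the mass
transport principle holds for every translation-covariant measurable `g`. -/
def MassStationary {d : ℕ} {Ω : Type*} [MeasurableSpace Ω] (P : Measure Ω)
    (Ψ : Ω → Measure (Vec d)) : Prop :=
  ∀ g : Measure (Vec d) → Vec d → Vec d → ℝ≥0∞,
    Measurable (fun p : Measure (Vec d) × Vec d × Vec d => g p.1 p.2.1 p.2.2) →
    Covariant3 g →
    ∫⁻ ω, (∫⁻ y, g (Ψ ω) 0 y ∂(Ψ ω)) ∂P = ∫⁻ ω, (∫⁻ y, g (Ψ ω) y 0 ∂(Ψ ω)) ∂P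

/-- The unit box `[0,1)^d`. -/
def unitBox (d : ℕ) : Set (Vec d) := Set.univ.pi fun _ : Fin d => Set.Ico (0 : ℝ) 1

open ProbabilityTheory

lemma bddFinite_iff {d : ℕ} (ψ : Measure (Vec d)) :
    BddFinite ψ ↔ ∀ n : ℕ, ψ (Metric.ball 0 n) < ⊤ := by
  constructor
  · intro h n
    exact h _ Metric.isBounded_ball
  · intro h s hs
    obtain ⟨r, hr⟩ := hs.subset_ball 0
    obtain ⟨n, hn⟩ := exists_nat_gt r
    exact (measure_mono (hr.trans (Metric.ball_subset_ball hn.le))).trans_lt (h n)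

lemma measurableSet_bddFinite {d : ℕ} : MeasurableSet {ψ : Measure (Vec d) | BddFinite ψ} := by
  simp only [bddFinite_iff, Set.ofPred_forall]
  exact MeasurableSet.iInter fun n =>
    measurableSet_lt (Measure.measurable_coe measurableSet_ball) measurable_const

lemma measurable_shiftM {d : ℕ} (t : Vec d) : Measurable (shiftM t) :=
  Measure.measurable_map _ (by fun_prop)

lemma BddFinite.shift {d : ℕ} {ψ : Measure (Vec d)} (h : BddFinite ψ) (t : Vec d) :
    BddFinite (shiftM t ψ) := by
  rw [bddFinite_iff]
  intro n
  rw [shiftM, Measure.map_apply (by fun_prop) measurableSet_ball]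
  refine h _ ?_
  refine (Metric.isBounded_ball (x := t) (r := n)).subset ?_
  intro x hx
  simpa [dist_eq_norm] using hx

lemma shiftM_shiftM {d : ℕ} (s t : Vec d) (ψ : Measure (Vec d)) :
    shiftM s (shiftM t ψ) = shiftM (s + t) ψ := by
  rw [shiftM, shiftM, shiftM, Measure.map_map (by fun_prop) (by fun_prop)]
  congr 1
  ext x i
  simp; ring

lemma bddFinite_shift_iff {d : ℕ} (ψ : Measure (Vec d)) (t : Vec d) :
    BddFinite (shiftM t ψ) ↔ BddFinite ψ := by
  refine ⟨fun h => ?_, fun h => h.shift t⟩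
  have := h.shift (-t)
  rw [shiftM_shiftM] at this
  simpa [shiftM] using this

open Classical in
/-- The identity kernel on boundedly finite measures, zero elsewhere. -/
def palmK (d : ℕ) : Kernel (Measure (Vec d)) (Vec d) where
  toFun ψ := if BddFinite ψ then ψ else 0
  measurable' := Measurable.ite measurableSet_bddFinite measurable_id measurable_const

lemma palmK_of {d : ℕ} {ψ : Measure (Vec d)} (h : BddFinite ψ) : palmK d ψ = ψ := by
  simp [palmK, h]

lemma palmK_not {d : ℕ} {ψ : Measure (Vec d)} (h : ¬ BddFinite ψ) : palmK d ψ = 0 := by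
  simp [palmK, h]

lemma palmK_bdd {d : ℕ} (ψ : Measure (Vec d)) : BddFinite (palmK d ψ) := by
  by_cases h : BddFinite ψ
  · rwa [palmK_of h]
  · rw [palmK_not h]; intro s _; simp

lemma palmK_shift {d : ℕ} (t : Vec d) (ψ : Measure (Vec d)) :
    palmK d (shiftM t ψ) = shiftM t (palmK d ψ) := by
  by_cases h : BddFinite ψ
  · rw [palmK_of h, palmK_of (h.shift t)]
  · rw [palmK_not h, palmK_not (by rwa [bddFinite_shift_iff])]; simp [shiftM]

/-- annuli -/
def ann (d : ℕ) (n : ℕ) : Set (Vec d) := (fun x => ⌊‖x‖⌋₊) ⁻¹' {n}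

lemma measurableSet_ann (d n : ℕ) : MeasurableSet (ann d n) :=
  (Nat.measurable_floor.comp measurable_norm) (measurableSet_singleton n)

lemma ann_bdd (d n : ℕ) : Bornology.IsBounded (ann d n) := by
  refine (Metric.isBounded_ball (x := (0 : Vec d)) (r := n + 1)).subset ?_
  intro x hx
  have hx : ⌊‖x‖⌋₊ = n := hx
  have := Nat.lt_floor_add_one ‖x‖
  rw [hx] at this
  simpa using this

lemma finite_kernel_sfinite {α β : Type*} [MeasurableSpace α] [MeasurableSpace β]
    (κ : Kernel α β) (h : ∀ a, κ a Set.univ < ⊤) : IsSFiniteKernel κ := by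
  classical
  let S : ℕ → Set α := fun m => (fun a => ⌊(κ a Set.univ).toReal⌋₊) ⁻¹' {m}
  have hS : ∀ m, MeasurableSet (S m) := fun m =>
    (Nat.measurable_floor.comp (κ.measurable_coe MeasurableSet.univ).ennreal_toReal)
      (measurableSet_singleton m)
  let η : ℕ → Kernel α β := fun m => Kernel.piecewise (hS m) κ 0
  have hη : ∀ m, IsFiniteKernel (η m) := by
    intro m
    refine ⟨⟨(m : ℝ≥0∞) + 1, by finiteness, fun a => ?_⟩⟩
    simp only [η, Kernel.piecewise_apply]
    split_ifs with ha
    · have ha : ⌊(κ a Set.univ).toReal⌋₊ = m := ha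
      have h1 := Nat.lt_floor_add_one (κ a Set.univ).toReal
      rw [ha] at h1
      rw [← ENNReal.ofReal_toReal (h a).ne]
      refine (ENNReal.ofReal_le_ofReal h1.le).trans ?_
      rw [ENNReal.ofReal_add (by positivity) (by positivity)]
      simp
    · simp
  have : κ = Kernel.sum η := by
    ext a s hs
    rw [Kernel.sum_apply' _ _ hs, tsum_eq_single ⌊(κ a Set.univ).toReal⌋₊]
    · simp [η, Kernel.piecewise_apply, S]
    · intro m hm
      have : a ∉ S m := fun h => hm (Eq.symm h)
      simp [η, Kernel.piecewise_apply, this]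
  rw [this]
  exact Kernel.isSFiniteKernel_sum

instance (d : ℕ) : IsSFiniteKernel (palmK d) := by
  have : palmK d = Kernel.sum fun n => (palmK d).restrict (measurableSet_ann d n) := by
    ext ψ s hs
    rw [Kernel.sum_apply' _ _ hs]
    simp_rw [Kernel.restrict_apply' _ _ _ hs]
    rw [← measure_iUnion]
    · congr 1
      ext x
      simp [ann]
    · intro i j hij
      refine Set.disjoint_left.2 fun x hx hy => hij ?_
      exact (Eq.symm hx.2).trans hy.2
    · exact fun n => hs.inter (measurableSet_ann d n)
  rw [this]
  have : ∀ n, IsSFiniteKernel ((palmK d).restrict (measurableSet_ann d n)) := fun n => by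
    apply finite_kernel_sfinite
    intro a
    simpa [Kernel.restrict_apply] using palmK_bdd a _ (ann_bdd d n)
  exact Kernel.isSFiniteKernel_sum

lemma measurable_palmShift (d : ℕ) :
    Measurable fun p : Measure (Vec d) × Vec d => shiftM p.2 (palmK d p.1) := by
  refine Measure.measurable_of_measurable_coe _ fun s hs => ?_
  have h : MeasurableSet {q : (Measure (Vec d) × Vec d) × Vec d | q.2 - q.1.2 ∈ s} := by
    have : Measurable fun q : (Measure (Vec d) × Vec d) × Vec d => q.2 - q.1.2 := by fun_prop
    exact this hs
  have := Kernel.measurable_kernel_prodMk_left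
    (κ := (palmK d).comap (Prod.fst : Measure (Vec d) × Vec d → _) measurable_fst) h
  convert this using 2 with p
  rw [shiftM, Measure.map_apply (by fun_prop) hs]
  rfl

/-- Campbell measure -/
def campbell {d : ℕ} (μ : Measure (Measure (Vec d))) : Measure (Vec d × Measure (Vec d)) :=
  (μ ⊗ₘ palmK d).map fun p => (p.2, shiftM p.2 (palmK d p.1))

lemma lintegral_campbell {d : ℕ} (μ : Measure (Measure (Vec d))) [SFinite μ]
    {g : Vec d × Measure (Vec d) → ℝ≥0∞} (hg : Measurable g) :
    ∫⁻ p, g p ∂(campbell μ) =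
      ∫⁻ ψ, ∫⁻ x, g (x, shiftM x (palmK d ψ)) ∂(palmK d ψ) ∂μ := by
  have hm : Measurable fun p : Measure (Vec d) × Vec d => (p.2, shiftM p.2 (palmK d p.1)) :=
    measurable_snd.prodMk (measurable_palmShift d)
  rw [campbell, lintegral_map hg hm, Measure.lintegral_compProd (f := fun p => g (p.2, shiftM p.2 (palmK d p.1))) (hg.comp hm)]

lemma campbell_shift {d : ℕ} (μ : Measure (Measure (Vec d))) [SFinite μ] (t : Vec d)
    (hμ : μ.map (shiftM t) = μ)
    {g : Vec d × Measure (Vec d) → ℝ≥0∞} (hg : Measurable g) :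
    ∫⁻ p, g (p.1 - t, p.2) ∂(campbell μ) = ∫⁻ p, g p ∂(campbell μ) := by
  have hm : Measurable fun p : Measure (Vec d) × Vec d => (p.2, shiftM p.2 (palmK d p.1)) :=
    measurable_snd.prodMk (measurable_palmShift d)
  rw [lintegral_campbell μ hg, lintegral_campbell μ (g := fun p => g (p.1 - t, p.2))
    (by fun_prop)]
  conv_rhs => rw [← hμ]
  rw [lintegral_map _ (measurable_shiftM t)]
  · refine lintegral_congr fun ψ => ?_
    rw [palmK_shift]
    simp_rw [shiftM_shiftM]
    conv_rhs => rw [shiftM]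
    rw [lintegral_map]
    · simp
    · have : Measurable fun x : Vec d => (x, shiftM (x + t) (palmK d ψ)) :=
        measurable_id.prodMk ((measurable_palmShift d).comp
          (measurable_const.prodMk (measurable_id.add_const t)))
      exact hg.comp this
    · fun_prop
  · exact (hg.comp hm).lintegral_kernel_prod_right' (κ := palmK d)

lemma measurableSet_unitBox (d : ℕ) : MeasurableSet (unitBox d) :=
  MeasurableSet.univ_pi fun _ => measurableSet_Ico

lemma volume_unitBox (d : ℕ) : volume (unitBox d) = 1 := by
  have := Real.volume_pi_Ico (a := fun _ : Fin d => (0:ℝ)) (b := fun _ => 1)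
  simpa [unitBox] using this

lemma interior_unitBox (d : ℕ) : (interior (unitBox d)).Nonempty := by
  rw [unitBox, interior_pi_set Set.finite_univ]
  simp only [interior_Ico]
  exact ⟨fun _ => 1/2, fun i _ => by norm_num⟩

lemma invariant_eq {d : ℕ} (ν : Measure (Vec d)) [ν.IsAddLeftInvariant]
    (h : ν (unitBox d) ≠ ⊤) : ν = ν (unitBox d) • volume := by
  have : IsFiniteMeasureOnCompacts ν := ⟨fun K hK =>
    measure_lt_top_of_isCompact_of_isAddLeftInvariant' (interior_unitBox d) h hK⟩
  have h1 := Measure.isAddLeftInvariant_eq_smul ν volume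
  have h2 : ν (unitBox d) = (Measure.addHaarScalarFactor ν volume : ℝ≥0∞) := by
    conv_lhs => rw [h1]
    simp [volume_unitBox]
  rw [h2]
  exact h1

lemma campbell_eq {d : ℕ} (μ : Measure (Measure (Vec d))) [SFinite μ]
    (hμ : ∀ t, μ.map (shiftM t) = μ) (hf : campbell μ (unitBox d ×ˢ Set.univ) ≠ ⊤) :
    ∃ Q : Measure (Measure (Vec d)), IsFiniteMeasure Q ∧ campbell μ = volume.prod Q := by
  let Q : Measure (Measure (Vec d)) := ((campbell μ).restrict (unitBox d ×ˢ Set.univ)).map Prod.snd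
  have hB := measurableSet_unitBox d
  have hQ : ∀ A, MeasurableSet A → Q A = campbell μ (unitBox d ×ˢ A) := by
    intro A hA
    rw [Measure.map_apply measurable_snd hA, Measure.restrict_apply (measurable_snd hA)]
    congr 1
    ext x
    simp [and_comm]
  have hQf : IsFiniteMeasure Q := ⟨by rw [hQ _ MeasurableSet.univ]; exact hf.lt_top⟩
  refine ⟨Q, hQf, (Measure.prod_eq fun s A hs hA => ?_).symm⟩
  let ν : Measure (Vec d) := ((campbell μ).restrict (Set.univ ×ˢ A)).map Prod.fst
  have hν : ∀ s, MeasurableSet s → ν s = campbell μ (s ×ˢ A) := by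
    intro s hs
    rw [Measure.map_apply measurable_fst hs, Measure.restrict_apply (measurable_fst hs)]
    congr 1
    ext x
    simp
  have hinv : ν.IsAddLeftInvariant := by
    refine ⟨fun t => ?_⟩
    ext s hs
    rw [Measure.map_apply (by fun_prop) hs, hν _ hs, hν _ (hs.preimage (by fun_prop))]
    have := campbell_shift μ (-t) (hμ _) (g := (s ×ˢ A).indicator 1)
      (measurable_one.indicator (hs.prod hA))
    rw [lintegral_indicator_one (hs.prod hA)] at this
    rw [← this, ← lintegral_indicator_one ((hs.preimage (by fun_prop)).prod hA)]
    refine lintegral_congr fun p => ?_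
    classical simp [Set.indicator_apply, Set.mem_prod, add_comm]
  have h1 : ν (unitBox d) ≠ ⊤ := by
    rw [hν _ hB]
    exact ne_top_of_le_ne_top hf (measure_mono (Set.prod_mono le_rfl (Set.subset_univ _)))
  have h2 := invariant_eq ν h1
  rw [← hν s hs, h2, hQ A hA, ← hν _ hB]
  simp [mul_comm]


/-- existence and uniqueness of the Palm measure.  Let `Φ` be a stationary
random measure on `ℝ^d` with intensity `λ_Φ = E[Φ([0,1)^d)] ∈ (0,∞)`.  Then there exists a
unique σ-finite measure `Q` on `M(ℝ^d)` such that for every measurable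
`g : ℝ^d × M(ℝ^d) → [0,∞]`,
`E[∫ g(x, T_x Φ) dΦ(x)] = ∫_{ℝ^d} ∫ g(x, ψ) dQ(ψ) dx`; moreover `Q` has total mass `λ_Φ`. -/
theorem stmt12 {d : ℕ} {Ω : Type*} [MeasurableSpace Ω] (P : Measure Ω) [IsProbabilityMeasure P]
    (Φ : Ω → Measure (Vec d)) (hΦm : Measurable Φ)
    (hbf : ∀ᵐ ω ∂P, BddFinite (Φ ω))
    (hstat : ∀ t : Vec d, P.map (fun ω => shiftM t (Φ ω)) = P.map Φ)
    (hpos : 0 < ∫⁻ ω, Φ ω (unitBox d) ∂P)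
    (hfin : (∫⁻ ω, Φ ω (unitBox d) ∂P) < ⊤) :
    ∃ Q : Measure (Measure (Vec d)), SigmaFinite Q ∧
      (∀ g : Vec d → Measure (Vec d) → ℝ≥0∞,
        Measurable (fun p : Vec d × Measure (Vec d) => g p.1 p.2) →
        ∫⁻ ω, (∫⁻ x, g x (shiftM x (Φ ω)) ∂(Φ ω)) ∂P
          = ∫⁻ x, (∫⁻ ψ, g x ψ ∂Q) ∂(volume : Measure (Vec d))) ∧
      Q Set.univ = ∫⁻ ω, Φ ω (unitBox d) ∂P ∧
      ∀ Q' : Measure (Measure (Vec d)), SigmaFinite Q' →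
        (∀ g : Vec d → Measure (Vec d) → ℝ≥0∞,
          Measurable (fun p : Vec d × Measure (Vec d) => g p.1 p.2) →
          ∫⁻ ω, (∫⁻ x, g x (shiftM x (Φ ω)) ∂(Φ ω)) ∂P
            = ∫⁻ x, (∫⁻ ψ, g x ψ ∂Q') ∂(volume : Measure (Vec d))) →
        Q' = Q := by
  have hstat' : ∀ t, (P.map Φ).map (shiftM t) = P.map Φ := fun t => by
    rw [Measure.map_map (measurable_shiftM t) hΦm]; exact hstat t
  have hprob : IsProbabilityMeasure (P.map Φ) := Measure.isProbabilityMeasure_map hΦm.aemeasurable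
  have hm : Measurable fun p : Measure (Vec d) × Vec d => (p.2, shiftM p.2 (palmK d p.1)) :=
    measurable_snd.prodMk (measurable_palmShift d)
  have key : ∀ g : Vec d → Measure (Vec d) → ℝ≥0∞,
        Measurable (fun p : Vec d × Measure (Vec d) => g p.1 p.2) →
        ∫⁻ ω, (∫⁻ x, g x (shiftM x (Φ ω)) ∂(Φ ω)) ∂P
          = ∫⁻ p, g p.1 p.2 ∂(campbell (P.map Φ)) := by
    intro g hg
    rw [lintegral_campbell _ hg, lintegral_map _ hΦm]
    · refine lintegral_congr_ae ?_
      filter_upwards [hbf] with ω hω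
      rw [palmK_of hω]
    · exact (hg.comp hm).lintegral_kernel_prod_right' (κ := palmK d)
  have hB := measurableSet_unitBox d
  have hsimp : ∀ A, MeasurableSet A → ∀ Q' : Measure (Measure (Vec d)), 
      ∫⁻ x, (∫⁻ ψ, (unitBox d ×ˢ A).indicator 1 (x, ψ) ∂Q') ∂(volume : Measure (Vec d)) = Q' A := by
    intro A hA Q'
    have : ∀ x : Vec d, (∫⁻ ψ, (unitBox d ×ˢ A).indicator (1 : Vec d × Measure (Vec d) → ℝ≥0∞) (x, ψ) ∂Q')
        = (unitBox d).indicator (fun _ => Q' A) x := by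
      intro x
      by_cases hx : x ∈ unitBox d
      · rw [Set.indicator_of_mem hx, ← lintegral_indicator_one hA]
        refine lintegral_congr fun ψ => ?_
        classical simp [Set.indicator_apply, Set.mem_prod, hx]
      · classical simp [Set.indicator_apply, Set.mem_prod, hx]
    simp_rw [this]
    rw [lintegral_indicator hB]
    simp [volume_unitBox]
  have hmeas : ∀ A : Set (Measure (Vec d)), MeasurableSet A →
      Measurable (fun p : Vec d × Measure (Vec d) =>
        (unitBox d ×ˢ A).indicator (1 : Vec d × Measure (Vec d) → ℝ≥0∞) (p.1, p.2)) := fun A hA =>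
    measurable_one.indicator (hB.prod hA)
  have htot : ∫⁻ ω, (∫⁻ x, (unitBox d ×ˢ Set.univ).indicator (1 : Vec d × Measure (Vec d) → ℝ≥0∞)
      (x, shiftM x (Φ ω)) ∂(Φ ω)) ∂P = ∫⁻ ω, Φ ω (unitBox d) ∂P := by
    refine lintegral_congr fun ω => ?_
    rw [← lintegral_indicator_one hB]
    refine lintegral_congr fun x => ?_
    classical simp [Set.indicator_apply, Set.mem_prod]
  have hf : campbell (P.map Φ) (unitBox d ×ˢ Set.univ) ≠ ⊤ := by
    rw [← lintegral_indicator_one (hB.prod MeasurableSet.univ)]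
    have := key (fun x ψ => (unitBox d ×ˢ Set.univ).indicator 1 (x, ψ)) (hmeas _ .univ)
    rw [htot] at this
    exact this ▸ hfin.ne
  obtain ⟨Q, hQf, hQ⟩ := campbell_eq (P.map Φ) hstat' hf
  have hform : ∀ g : Vec d → Measure (Vec d) → ℝ≥0∞,
        Measurable (fun p : Vec d × Measure (Vec d) => g p.1 p.2) →
        ∫⁻ ω, (∫⁻ x, g x (shiftM x (Φ ω)) ∂(Φ ω)) ∂P
          = ∫⁻ x, (∫⁻ ψ, g x ψ ∂Q) ∂(volume : Measure (Vec d)) := by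
    intro g hg
    rw [key g hg, hQ, lintegral_prod _ hg.aemeasurable]
  refine ⟨Q, inferInstance, hform, ?_, ?_⟩
  · rw [← hsimp _ .univ Q, ← htot]
    exact (hform (fun x ψ => (unitBox d ×ˢ Set.univ).indicator 1 (x, ψ)) (hmeas _ .univ)).symm
  · intro Q' _ hQ'
    ext A hA
    rw [← hsimp A hA Q, ← hsimp A hA Q']
    exact (hQ' (fun x ψ => (unitBox d ×ˢ A).indicator 1 (x, ψ)) (hmeas _ hA)).symm.trans
      (hform (fun x ψ => (unitBox d ×ˢ A).indicator 1 (x, ψ)) (hmeas _ hA))
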